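/- For every prime power q and every 0 < δ ≤ 1 there exists a constant C = C(q,δ) > 0 such that the following holds: for every 0 < ε ≤ 1, every n, and every admissible tuple (a,b,c), if A ⊆ F_q^n is an (ε,δ)-cap set for (a,b,c), then the 3-tensor T_F associated to the function F : A^3 → F_q defined by F(x,y,z) = 1 if ax+by+cz = 0 and F(x,y,z) = 0 otherwise, satisfies s-rank(T_F) ≥ C·|A|^{1−ε/3}. -/

import Mathlib

/-- A multilinear map (`3`-tensor) `T : V³ → 𝔽` has slice rank at most `k` if it is
a sum of `k` multilinear maps, each of the form `v ↦ L (v i) * S (v away from i)`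
with `L` linear and `S` multilinear (bilinear) in the remaining arguments. -/
def SliceRankLE {𝔽 V : Type*} [CommSemiring 𝔽] [AddCommMonoid V] [Module 𝔽 V] {d : ℕ}
    (T : MultilinearMap 𝔽 (fun _ : Fin d => V) 𝔽) (k : ℕ) : Prop :=
  ∃ Ts : Fin k → MultilinearMap 𝔽 (fun _ : Fin d => V) 𝔽,
    (∀ j, ∃ (i : Fin d) (L : V →ₗ[𝔽] 𝔽)
        (S : MultilinearMap 𝔽 (fun _ : {m : Fin d // m ≠ i} => V) 𝔽),
      ∀ v, Ts j v = L (v i) * S (fun m => v m.1)) ∧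
    T = ∑ j, Ts j

/-!
Fixing functions on all legs but one of a sum of `k` slices annihilates it as soon as every slice is
killed by one of the fixed functions, and each slice costs a single linear condition, hence at most
one zero. So the functions can be chosen with at most `k` zeros in total, and testing a diagonal
tensor at a point where none of them vanishes shows that its slice rank is at least the size of the
set. In particular, a cap set inside `A` has at most `k` elements if `T_F` has slice rank at most
`k`.

It remains to cover a large part of `A'` by few cap sets. Let `R = |A|^ε` bound the number of pairs
at each point of `A'`. A random linear map into `F_q^{3m}` with `q^{3m} ≥ 2R` separates at least
half of the points `x` of `A'` from every `y ≠ x` occurring in a solution with `x`. Now `F_q^{3m}`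
is partitioned into `q^m` products of anisotropic paraboloids, which are cap sets by strict
convexity in its algebraic form `c (a Q x + b Q y + c Q z) = -a b Q (x - y)`; their preimages
partition the separated points into `q^m = O(R^{1/3})` cap sets, so that
`δ |A| < |A'| = O(k |A|^{ε/3})`.
-/

open Finset Function Module

section Zeros

variable {K α ι : Type*} [Field K] [Fintype α] [DecidableEq K]

lemma exists_mem_card_support_lt {W : Submodule K (α → K)} {f : α → K} (hf : f ∈ W)
    (hlt : #{x | f x ≠ 0} < finrank K W) :
    ∃ g ∈ W, #{x | f x ≠ 0} < #{x | g x ≠ 0} := by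
  let restrict : W →ₗ[K] ({x // f x ≠ 0} → K) :=
    LinearMap.funLeft K K Subtype.val ∘ₗ W.subtype
  have hker : restrict.ker ≠ ⊥ := LinearMap.ker_ne_bot_of_finrank_lt <| by
    rwa [finrank_fintype_fun_eq_card, Fintype.card_subtype]
  obtain ⟨⟨g, hgW⟩, hg, hg_ne⟩ := (Submodule.ne_bot_iff _).1 hker
  have hg_zero (x : α) (hx : f x ≠ 0) : g x = 0 := congrFun hg ⟨x, hx⟩
  obtain ⟨x₀, hx₀⟩ : ∃ x, g x ≠ 0 := Function.ne_iff.1 fun h ↦ hg_ne (Subtype.ext h)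
  have hfx₀ : f x₀ = 0 := by_contra fun h ↦ hx₀ (hg_zero x₀ h)
  refine ⟨f + g, W.add_mem hf hgW, card_lt_card ?_⟩
  refine (ssubset_iff_of_subset fun x hx ↦ ?_).2 ⟨x₀, by simp [hfx₀, hx₀], by simp [hfx₀]⟩
  have hfx : f x ≠ 0 := by simpa using hx
  simp [hg_zero x hfx, hfx]

lemma exists_mem_finrank_le_card_support (W : Submodule K (α → K)) :
    ∃ f ∈ W, finrank K W ≤ #{x | f x ≠ 0} := by
  suffices h : ∀ n ≤ finrank K W, ∃ f ∈ W, n ≤ #{x | f x ≠ 0} from h _ le_rfl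
  intro n hn
  induction n with
  | zero => exact ⟨0, W.zero_mem, Nat.zero_le _⟩
  | succ n ih =>
    obtain ⟨f, hfW, hf⟩ := ih (Nat.le_of_succ_le hn)
    rcases hf.lt_or_eq with hlt | heq
    · exact ⟨f, hfW, hlt⟩
    · obtain ⟨g, hgW, hg⟩ := exists_mem_card_support_lt hfW (heq ▸ hn)
      exact ⟨g, hgW, heq ▸ hg⟩

lemma exists_dual_apply_eq_zero_card_zeros_le (J : Finset ι) (l : ι → Dual K (α → K)) :
    ∃ f : α → K, (∀ j ∈ J, l j f = 0) ∧ #{x | f x = 0} ≤ #J := by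
  let evalJ : (α → K) →ₗ[K] (J → K) := LinearMap.pi fun j ↦ l j
  obtain ⟨f, hf, hsupp⟩ := exists_mem_finrank_le_card_support evalJ.ker
  refine ⟨f, fun j hj ↦ congrFun hf ⟨j, hj⟩, ?_⟩
  have hrank : finrank K evalJ.range ≤ #J := by simpa using evalJ.range.finrank_le
  have hnullity : finrank K evalJ.range + finrank K evalJ.ker = Fintype.card α := by
    simpa using evalJ.finrank_range_add_finrank_ker
  have hcompl : #{x | f x = 0} + #{x | f x ≠ 0} = Fintype.card α :=
    card_filter_add_card_filter_not _
  omega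

lemma exists_forall_ne_zero_of_sum_card_zeros_lt {s : Finset ι} {f : ι → α → K}
    (h : ∑ i ∈ s, #{x | f i x = 0} < Fintype.card α) : ∃ x, ∀ i ∈ s, f i x ≠ 0 := by
  classical
  have hlt : #(s.biUnion fun i ↦ {x | f i x = 0}) < #(univ : Finset α) := card_biUnion_le.trans_lt h
  obtain ⟨x, -, hx⟩ := exists_mem_notMem_of_card_lt_card hlt
  exact ⟨x, fun i hi hix ↦ hx (mem_biUnion.2 ⟨i, hi, by simpa using hix⟩)⟩

end Zeros

section Slice

variable {K V V' : Type*} [CommSemiring K] [AddCommMonoid V] [Module K V] [AddCommMonoid V']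
  [Module K V'] {d k : ℕ}

lemma exists_dual_forall_slice_eq_zero {i p q : Fin d} (hpq : p ≠ q) (hi : i = p ∨ i = q)
    (L : V →ₗ[K] K) (S : MultilinearMap K (fun _ : {m : Fin d // m ≠ i} ↦ V) K) (f : Fin d → V) :
    ∃ l : Dual K V, ∀ g, l g = 0 → ∀ h,
      L (update (update f p g) q h i) * S (fun m ↦ update (update f p g) q h m) = 0 := by
  rcases hi with rfl | rfl
  · exact ⟨L, fun g hg h ↦ by simp [update_of_ne hpq, hg]⟩
  · refine ⟨S.toLinearMap (fun m ↦ f m) ⟨p, hpq⟩, fun g hg h ↦ ?_⟩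
    have hrest : (fun m : {m // m ≠ i} ↦ update (update f p g) i h m) =
        update (fun m : {m // m ≠ i} ↦ f m) ⟨p, hpq⟩ g := by
      funext m
      rw [update_of_ne m.2]
      exact congrFun (update_comp_eq_of_injective f Subtype.val_injective ⟨p, hpq⟩ g) m
    rw [hrest, ← MultilinearMap.toLinearMap_apply, hg, mul_zero]

lemma SliceRankLE.compLinearMap {T : MultilinearMap K (fun _ : Fin d ↦ V) K}
    (hT : SliceRankLE T k) (φ : V' →ₗ[K] V) : SliceRankLE (T.compLinearMap fun _ ↦ φ) k := by
  obtain ⟨Ts, hTs, rfl⟩ := hT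
  refine ⟨fun j ↦ (Ts j).compLinearMap fun _ ↦ φ, fun j ↦ ?_, ?_⟩
  · obtain ⟨i, L, S, hS⟩ := hTs j
    exact ⟨i, L ∘ₗ φ, S.compLinearMap fun _ ↦ φ, fun v ↦ hS fun i ↦ φ (v i)⟩
  · ext v
    simp

/-- The `p`-th function must kill the slices of legs `p` and `q` alike: once the functions on the
other legs are fixed, a slice of leg `q` contributes one linear condition on leg `p`. -/
lemma SliceRankLE.exists_forall_update_eq_zero {K α : Type*} [Field K] [DecidableEq K]
    [Fintype α] {T : MultilinearMap K (fun _ : Fin d ↦ α → K) K} (hT : SliceRankLE T k)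
    {p q : Fin d} (hpq : p ≠ q) :
    ∃ f : Fin d → α → K, (∀ h, T (update f q h) = 0) ∧
      ∑ i ∈ univ.erase q, #{x | f i x = 0} ≤ k := by
  obtain ⟨Ts, hTs, rfl⟩ := hT
  choose leg L S hS using hTs
  choose f hfL hf using fun i ↦ exists_dual_apply_eq_zero_card_zeros_le {j | leg j = i} L
  have hdual (j : Fin k) : ∃ l : Dual K (α → K), leg j = p ∨ leg j = q →
      ∀ g, l g = 0 → ∀ h, Ts j (update (update f p g) q h) = 0 := by
    by_cases hj : leg j = p ∨ leg j = q
    · obtain ⟨l, hl⟩ := exists_dual_forall_slice_eq_zero hpq hj (L j) (S j) f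
      exact ⟨l, fun _ g hg h ↦ (hS j _).trans (hl g hg h)⟩
    · exact ⟨0, fun h ↦ absurd h hj⟩
  choose l hl using hdual
  let chargedLeg (j : Fin k) : Fin d := if leg j = q then p else leg j
  have hchargedLeg_p (j : Fin k) : chargedLeg j = p ↔ leg j = p ∨ leg j = q := by grind
  obtain ⟨g, hgl, hg⟩ := exists_dual_apply_eq_zero_card_zeros_le {j | chargedLeg j = p} l
  refine ⟨update f p g, fun h ↦ ?_, ?_⟩
  · rw [_root_.sum_apply]
    refine sum_eq_zero fun j _ ↦ ?_
    by_cases hj : leg j = p ∨ leg j = q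
    · exact hl j hj g (hgl j (by simp [hchargedLeg_p, hj])) h
    · obtain ⟨hjp, hjq⟩ := not_or.1 hj
      rw [hS, update_of_ne hjq, update_of_ne hjp, hfL (leg j) j (by simp), zero_mul]
  · calc ∑ i ∈ univ.erase q, #{x | update f p g i x = 0}
        ≤ ∑ i ∈ univ.erase q, #{j | chargedLeg j = i} := by
          refine sum_le_sum fun i hi ↦ ?_
          by_cases hip : i = p
          · subst hip
            simpa using hg
          · have hchargedLeg_i (j : Fin k) : chargedLeg j = i ↔ leg j = i := by grind
            simpa only [update_of_ne hip, hchargedLeg_i] using hf i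
      _ = #(univ : Finset (Fin k)) := .symm <| card_eq_sum_card_fiberwise fun j _ ↦ by grind
      _ = k := card_fin k

end Slice

section TensorOfFun

variable {K α β : Type*} [Fintype α] [Fintype β] {d k : ℕ}

section CommSemiring

variable [CommSemiring K]

/-- The tensor `T_G (v₁, …, v_d) = ∑ x, G x * v₁ x₁ * ⋯ * v_d x_d` on `α → K` with coefficient
function `G : α^d → K`. -/
noncomputable def tensorOfFun (G : (Fin d → α) → K) :
    MultilinearMap K (fun _ : Fin d ↦ α → K) K :=
  ∑ x, G x • (MultilinearMap.mkPiAlgebra K (Fin d) K).compLinearMap fun i ↦ LinearMap.proj (x i)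

lemma tensorOfFun_apply (G : (Fin d → α) → K) (v : Fin d → α → K) :
    tensorOfFun G v = ∑ x, G x * ∏ i, v i (x i) := by
  simp [tensorOfFun]

lemma tensorOfFun_comp_extendByZero (G : (Fin d → α) → K) {e : β → α} (he : Injective e) :
    ((tensorOfFun G).compLinearMap fun _ ↦ ExtendByZero.linearMap K e) =
      tensorOfFun fun y ↦ G (e ∘ y) := by
  ext v
  simp only [MultilinearMap.compLinearMap_apply, tensorOfFun_apply, ExtendByZero.linearMap_apply]
  refine (Fintype.sum_of_injective (e ∘ ·) he.comp_left _ _ (fun x hx ↦ ?_) fun y ↦ ?_).symm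
  · obtain ⟨i, hi⟩ : ∃ i, x i ∉ Set.range e := by
      by_contra! h
      choose y hy using h
      exact hx ⟨y, funext hy⟩
    rw [prod_eq_zero (mem_univ i) (extend_apply' _ _ _ hi), mul_zero]
  · simp [he.extend_apply]

lemma tensorOfFun_apply_of_diagonal [DecidableEq α] {G : (Fin d → α) → K}
    (hG : ∀ x, G x ≠ 0 → ∀ i j, x i = x j) {v : Fin d → α → K} {q : Fin d} {t : α}
    (hv : v q = Pi.single t 1) : tensorOfFun G v = G (fun _ ↦ t) * ∏ i, v i t := by
  rw [tensorOfFun_apply]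
  refine sum_eq_single_of_mem _ (mem_univ _) fun x _ hx ↦ ?_
  by_cases hGx : G x = 0
  · rw [hGx, zero_mul]
  · have hxq : x q ≠ t := fun h ↦ hx (funext fun i ↦ (hG x hGx i q).trans h)
    rw [prod_eq_zero (mem_univ q) (by rw [hv, Pi.single_eq_of_ne hxq]), mul_zero]

end CommSemiring

variable [Field K]

theorem SliceRankLE.card_le_of_diagonal [Nontrivial (Fin d)] {G : (Fin d → α) → K}
    (hG : ∀ x, G x ≠ 0 ↔ ∀ i j, x i = x j) (hT : SliceRankLE (tensorOfFun G) k) :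
    Fintype.card α ≤ k := by
  classical
  obtain ⟨p, q, hpq⟩ := exists_pair_ne (Fin d)
  obtain ⟨f, hTf, hzeros⟩ := hT.exists_forall_update_eq_zero hpq
  by_contra! hlt
  obtain ⟨t, ht⟩ := exists_forall_ne_zero_of_sum_card_zeros_lt (f := f) (hzeros.trans_lt hlt)
  have hzero : G (fun _ ↦ t) * ∏ i, update f q (Pi.single t 1) i t = 0 := by
    rw [← tensorOfFun_apply_of_diagonal (fun x ↦ (hG x).1) (update_self q _ f), hTf]
  have hGt : G (fun _ ↦ t) ≠ 0 := (hG _).2 fun _ _ ↦ rfl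
  refine mul_ne_zero hGt (prod_ne_zero_iff.2 fun i _ ↦ ?_) hzero
  by_cases hi : i = q
  · simp [hi]
  · simpa [update_of_ne hi] using ht i (by simp [hi])

theorem SliceRankLE.card_le_of_diagonal_comp [Nontrivial (Fin d)] {G : (Fin d → α) → K}
    {e : β → α} (he : Injective e) (hG : ∀ y : Fin d → β, G (e ∘ y) ≠ 0 ↔ ∀ i j, y i = y j)
    (hT : SliceRankLE (tensorOfFun G) k) : Fintype.card β ≤ k :=
  card_le_of_diagonal hG <| tensorOfFun_comp_extendByZero G he ▸ hT.compLinearMap _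

end TensorOfFun

section CapSet

variable {F V W : Type*}

/-- `B` is a cap set for `(a, b, c)`: it contains only the trivial solutions `x = y = z` of
`a x + b y + c z = 0`. -/
def IsCapSet [Semiring F] [AddCommMonoid V] [Module F V] (a b c : F) (B : Set V) : Prop :=
  ∀ x ∈ B, ∀ y ∈ B, ∀ z ∈ B, a • x + b • y + c • z = 0 → x = y ∧ y = z

lemma IsCapSet.pi {κ ι : Type*} [Semiring F] [AddCommMonoid W] [Module F W] {a b c : F} {χ : W → κ}
    (hχ : ∀ t, IsCapSet a b c (χ ⁻¹' {t})) (t : ι → κ) :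
    IsCapSet a b c ((fun (w : ι → W) i ↦ χ (w i)) ⁻¹' {t}) := by
  intro x hx y hy z hz h
  have hi (i : ι) : x i = y i ∧ y i = z i :=
    hχ (t i) _ (congrFun hx i) _ (congrFun hy i) _ (congrFun hz i) (congrFun h i)
  exact ⟨funext fun i ↦ (hi i).1, funext fun i ↦ (hi i).2⟩

lemma mul_sum_quadraticForm_eq [CommRing F] [AddCommGroup V] [Module F V]
    (Q : QuadraticForm F V) {a b c : F} (habc : a + b + c = 0) {x y z : V}
    (h : a • x + b • y + c • z = 0) :
    c * (a * Q x + b * Q y + c * Q z) = -(a * b) * Q (x - y) := by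
  have hQz : c * c * Q z = a * a * Q x + b * b * Q y + a * b * QuadraticMap.polar Q x y := by
    have hz : Q (c • z) = Q (a • x + b • y) := by
      rw [← neg_eq_of_add_eq_zero_right h, QuadraticMap.map_neg]
    rw [QuadraticMap.map_smul, QuadraticMap.map_add Q, QuadraticMap.map_smul, QuadraticMap.map_smul,
      QuadraticMap.polar_smul_left, QuadraticMap.polar_smul_right] at hz
    simpa only [smul_eq_mul, mul_assoc] using hz
  have hQsub : Q (x - y) = Q x + Q y - QuadraticMap.polar Q x y := by
    rw [sub_eq_add_neg, QuadraticMap.map_add Q, QuadraticMap.map_neg, QuadraticMap.polar_neg_right]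
    ring
  rw [hQsub]
  linear_combination hQz + (a * Q x + b * Q y) * habc

section IsDomain

variable [CommRing F] [IsDomain F] [AddCommGroup V] [Module F V] [IsTorsionFree F V] {a b c : F}

lemma isCapSet_of_forall_eq (hc : c ≠ 0) (habc : a + b + c = 0) {B : Set V}
    (h : ∀ x ∈ B, ∀ y ∈ B, ∀ z ∈ B, a • x + b • y + c • z = 0 → x = y) : IsCapSet a b c B := by
  intro x hx y hy z hz hxyz
  obtain rfl := h x hx y hy z hz hxyz
  have hcz : c • (z - x) = 0 := by
    rw [← hxyz, ← add_smul, eq_neg_of_add_eq_zero_left habc, neg_smul, smul_sub]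
    abel
  exact ⟨rfl, (sub_eq_zero.1 ((smul_eq_zero.1 hcz).resolve_left hc)).symm⟩

lemma isCapSet_paraboloid {Q : QuadraticForm F V} (hQ : Q.Anisotropic) (ha : a ≠ 0) (hb : b ≠ 0)
    (hc : c ≠ 0) (habc : a + b + c = 0) (t : F) :
    IsCapSet a b c ((fun w : V × F ↦ w.2 - Q w.1) ⁻¹' {t}) := by
  refine isCapSet_of_forall_eq hc habc ?_
  rintro ⟨x, x'⟩ hx ⟨y, y'⟩ hy ⟨z, z'⟩ hz h
  obtain rfl : x' = t + Q x := sub_eq_iff_eq_add.1 hx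
  obtain rfl : y' = t + Q y := sub_eq_iff_eq_add.1 hy
  obtain rfl : z' = t + Q z := sub_eq_iff_eq_add.1 hz
  have hV : a • x + b • y + c • z = 0 := congrArg Prod.fst h
  have hF : a * (t + Q x) + b * (t + Q y) + c * (t + Q z) = 0 := congrArg Prod.snd h
  have hab : a * b * Q (x - y) = 0 := by
    linear_combination c * t * habc - c * hF + mul_sum_quadraticForm_eq Q habc hV
  obtain rfl : x = y :=
    sub_eq_zero.1 <| hQ _ ((mul_eq_zero.1 hab).resolve_left (mul_ne_zero ha hb))
  rfl

end IsDomain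

lemma exists_forall_sq_add_self_ne (F : Type*) [Ring F] [Nontrivial F] [Finite F] :
    ∃ u : F, ∀ s : F, s ^ 2 + s ≠ u := by
  have hinj : ¬ Injective fun s : F ↦ s ^ 2 + s := fun h ↦ by
    have : (0 : F) = -1 := h (by simp)
    simp at this
  simpa [Surjective] using mt Finite.injective_iff_surjective.2 hinj

lemma exists_anisotropic_quadraticForm_prod (F : Type*) [Field F] [Finite F] :
    ∃ Q : QuadraticForm F (F × F), Q.Anisotropic := by
  obtain ⟨u, hu⟩ := exists_forall_sq_add_self_ne F
  let X : F × F →ₗ[F] F := LinearMap.fst F F F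
  let Y : F × F →ₗ[F] F := LinearMap.snd F F F
  refine ⟨.linMulLin X X + .linMulLin X Y - u • .linMulLin Y Y, ?_⟩
  rintro ⟨s, t⟩ h
  replace h : s * s + s * t - u * (t * t) = 0 := by simpa [X, Y] using h
  obtain rfl : t = 0 := by
    by_contra ht
    refine hu (s / t) ?_
    field_simp
    linear_combination h
  simpa using h

lemma exists_coloring_isCapSet [Field F] [Finite F] {a b c : F} (ha : a ≠ 0) (hb : b ≠ 0)
    (hc : c ≠ 0) (habc : a + b + c = 0) (ι : Type*) :
    ∃ χ : (ι → (F × F) × F) → (ι → F), ∀ t, IsCapSet a b c (χ ⁻¹' {t}) := by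
  obtain ⟨Q, hQ⟩ := exists_anisotropic_quadraticForm_prod F
  exact ⟨_, IsCapSet.pi (isCapSet_paraboloid hQ ha hb hc habc)⟩

end CapSet

section RandomLinearMap

variable {F V W : Type*} [Field F] [AddCommGroup V] [Module F V] [AddCommGroup W] [Module F W]

lemma applyₗ_surjective_of_ne_zero {w : V} (hw : w ≠ 0) :
    Surjective (LinearMap.applyₗ w : (V →ₗ[F] W) →ₗ[F] W) := by
  obtain ⟨φ, hφ⟩ : ∃ φ : Dual F V, φ w ≠ 0 := by
    by_contra! h
    exact hw ((forall_dual_apply_eq_zero_iff F w).1 h)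
  exact fun y ↦ ⟨φ.smulRight ((φ w)⁻¹ • y), by simp [smul_smul, hφ]⟩

lemma card_linearMap_apply_eq_zero_mul_card {w : V} (hw : w ≠ 0) :
    Nat.card {π : V →ₗ[F] W // π w = 0} * Nat.card W = Nat.card (V →ₗ[F] W) := by
  let eval : (V →ₗ[F] W) →ₗ[F] W := LinearMap.applyₗ w
  have hquot : Nat.card ((V →ₗ[F] W) ⧸ eval.ker) = Nat.card W :=
    Nat.card_congr (eval.quotKerEquivOfSurjective (applyₗ_surjective_of_ne_zero hw)).toEquiv
  rw [eval.ker.card_eq_card_quotient_mul_card, hquot]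
  rfl

variable [Finite F] [Finite W]

open Classical in
lemma exists_linearMap_card_apply_eq_zero_mul_card_le_of_finite [Finite V] {ι : Type*}
    {s : Finset ι} {w : ι → V} (hw : ∀ i ∈ s, w i ≠ 0) :
    ∃ π : V →ₗ[F] W, #{i ∈ s | π (w i) = 0} * Nat.card W ≤ #s := by
  have := Module.finite_of_finite F (M := V →ₗ[F] W)
  have := Fintype.ofFinite (V →ₗ[F] W)
  suffices h : ∑ π : V →ₗ[F] W, #{i ∈ s | π (w i) = 0} * Nat.card W = ∑ _π : V →ₗ[F] W, #s by
    obtain ⟨π, -, hπ⟩ := exists_le_of_sum_le univ_nonempty h.le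
    exact ⟨π, hπ⟩
  calc ∑ π : V →ₗ[F] W, #{i ∈ s | π (w i) = 0} * Nat.card W
      = ∑ i ∈ s, #{π : V →ₗ[F] W | π (w i) = 0} * Nat.card W := by
        rw [← sum_mul, ← sum_mul]
        exact congrArg (· * _) (sum_card_bipartiteAbove_eq_sum_card_bipartiteBelow _)
    _ = ∑ _i ∈ s, Nat.card (V →ₗ[F] W) := sum_congr rfl fun i hi ↦ by
        rw [← card_linearMap_apply_eq_zero_mul_card (hw i hi), ← Fintype.card_subtype,
          Nat.card_eq_fintype_card (α := {π : V →ₗ[F] W // π (w i) = 0})]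
    _ = ∑ _π : V →ₗ[F] W, #s := by
        rw [sum_const, sum_const, card_univ, Nat.card_eq_fintype_card, smul_eq_mul, smul_eq_mul,
          mul_comm]

open Classical in
lemma exists_linearMap_card_apply_eq_zero_mul_card_le {ι : Type*} {s : Finset ι} {w : ι → V}
    (hw : ∀ i ∈ s, w i ≠ 0) :
    ∃ π : V →ₗ[F] W, #{i ∈ s | π (w i) = 0} * Nat.card W ≤ #s := by
  let U := Submodule.span F (s.image w : Set V)
  have := Module.finite_of_finite F (M := U)
  obtain ⟨r, hr⟩ := U.subtype.exists_leftInverse_of_injective U.ker_subtype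
  have hrw : ∀ i ∈ s, r (w i) ≠ 0 := fun i hi h ↦ by
    have hwU : w i ∈ U := Submodule.subset_span (mem_image_of_mem w hi)
    have hr_self : r (w i) = ⟨w i, hwU⟩ := LinearMap.congr_fun hr ⟨w i, hwU⟩
    exact hw i hi (congrArg Subtype.val (hr_self.symm.trans h))
  obtain ⟨π, hπ⟩ :=
    exists_linearMap_card_apply_eq_zero_mul_card_le_of_finite (F := F) (V := U) (W := W) hrw
  exact ⟨π ∘ₗ r, hπ⟩

open Classical in
lemma exists_linearMap_card_le_two_mul_card_isolated {X : Finset V} {N : V → Finset V}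
    (hself : ∀ x ∈ X, x ∉ N x) (hN : ∀ x ∈ X, 2 * #(N x) ≤ Nat.card W) :
    ∃ π : V →ₗ[F] W, #X ≤ 2 * #{x ∈ X | ∀ y ∈ N x, π y ≠ π x} := by
  let E : Finset (Σ _ : V, V) := X.sigma N
  obtain ⟨π, hπ⟩ := exists_linearMap_card_apply_eq_zero_mul_card_le (F := F) (W := W) (s := E)
    (w := fun e ↦ e.2 - e.1) fun e he h ↦ hself e.1 (mem_sigma.1 he).1 <|
      sub_eq_zero.1 h ▸ (mem_sigma.1 he).2
  refine ⟨π, ?_⟩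
  set collapsed : Finset (Σ _ : V, V) := {e ∈ E | π (e.2 - e.1) = 0}
  have hE : 2 * #E ≤ #X * Nat.card W := by
    rw [card_sigma, mul_sum, ← smul_eq_mul]
    exact sum_le_card_nsmul _ _ _ hN
  have hcollapsed : 2 * #collapsed ≤ #X :=
    Nat.le_of_mul_le_mul_right (by linarith) (Nat.card_pos (α := W))
  have hbad : #{x ∈ X | ¬ ∀ y ∈ N x, π y ≠ π x} ≤ #collapsed := by
    refine (card_le_card fun x hx ↦ ?_).trans (card_image_le (f := Sigma.fst))
    obtain ⟨hxX, hx⟩ := mem_filter.1 hx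
    push Not at hx
    obtain ⟨y, hy, hxy⟩ := hx
    exact mem_image.2 ⟨⟨x, y⟩, mem_filter.2 ⟨mem_sigma.2 ⟨hxX, hy⟩, by simp [hxy]⟩, rfl⟩
  have := card_filter_add_card_filter_not (s := X) fun x ↦ ∀ y ∈ N x, π y ≠ π x
  omega

end RandomLinearMap

section AlmostCap

variable {F V : Type*}

section Semiring

variable [Semiring F] [AddCommMonoid V] [Module F V] {a b c : F}

/-- The pairs `(y, z)` counted in the definition of an `(ε, δ)`-cap set. -/
def solutionPairs (a b c : F) (A : Finset V) (x : V) : Set (V × V) :=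
  {p | p.1 ∈ A ∧ p.2 ∈ A ∧ a • x + b • p.1 + c • p.2 = 0}

lemma finite_solutionPairs (A : Finset V) (x : V) : (solutionPairs a b c A x).Finite :=
  (A ×ˢ A).finite_toSet.subset fun _ hp ↦ mem_product.2 ⟨hp.1, hp.2.1⟩

lemma one_le_ncard_solutionPairs (habc : a + b + c = 0) {A : Finset V} {x : V} (hx : x ∈ A) :
    1 ≤ (solutionPairs a b c A x).ncard :=
  (Set.ncard_pos (finite_solutionPairs A x)).2
    ⟨(x, x), hx, hx, by rw [← add_smul, ← add_smul, habc, zero_smul]⟩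

open Classical in
lemma card_filter_exists_le_ncard_solutionPairs (A : Finset V) (x : V) :
    #{y ∈ A | y ≠ x ∧ ∃ z ∈ A, a • x + b • y + c • z = 0} ≤ (solutionPairs a b c A x).ncard := by
  rw [← Set.ncard_coe_finset]
  refine (Set.ncard_le_ncard ?_ ((finite_solutionPairs A x).image Prod.fst)).trans
    (Set.ncard_image_le (finite_solutionPairs A x))
  intro y hy
  obtain ⟨hyA, -, z, hzA, hz⟩ := mem_filter.1 hy
  exact ⟨(y, z), ⟨hyA, hzA, hz⟩, rfl⟩

end Semiring

variable [Field F] [AddCommGroup V] [Module F V] {a b c : F}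

lemma card_le_of_forall_isCapSet_card_le [Finite F] {W κ : Type*} [AddCommGroup W] [Module F W]
    [Finite W] [Finite κ] (hc : c ≠ 0) (habc : a + b + c = 0) {χ : W → κ}
    (hχ : ∀ t, IsCapSet a b c (χ ⁻¹' {t})) {A A' : Finset V} (hA' : A' ⊆ A)
    (hpairs : ∀ x ∈ A', 2 * (solutionPairs a b c A x).ncard ≤ Nat.card W) {k : ℕ}
    (hk : ∀ B ⊆ A, IsCapSet a b c (B : Set V) → #B ≤ k) :
    #A' ≤ 2 * (k * Nat.card κ) := by
  classical
  let N (x : V) : Finset V := {y ∈ A | y ≠ x ∧ ∃ z ∈ A, a • x + b • y + c • z = 0}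
  obtain ⟨π, hπ⟩ := exists_linearMap_card_le_two_mul_card_isolated (F := F) (W := W) (X := A')
    (N := N) (fun x _ hx ↦ (mem_filter.1 hx).2.1 rfl) fun x hx ↦
      (Nat.mul_le_mul_left 2 (card_filter_exists_le_ncard_solutionPairs A x)).trans (hpairs x hx)
  set isolated : Finset V := {x ∈ A' | ∀ y ∈ N x, π y ≠ π x}
  have hisolated : isolated ⊆ A := (filter_subset _ _).trans hA'
  have hfiber (t : κ) : IsCapSet a b c (({x ∈ isolated | χ (π x) = t} : Finset V) : Set V) := by
    refine isCapSet_of_forall_eq hc habc fun x hx y hy z hz h ↦ ?_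
    simp only [coe_filter, Set.mem_ofPred_eq] at hx hy hz
    have hπ_eq : π x = π y :=
      (hχ t _ hx.2 _ hy.2 _ hz.2 (by simpa using congrArg π h)).1
    by_contra hne
    exact (mem_filter.1 hx.1).2 y
      (mem_filter.2 ⟨hisolated hy.1, Ne.symm hne, z, hisolated hz.1, h⟩) hπ_eq.symm
  have hcard : #isolated ≤ k * Nat.card κ := by
    have := Fintype.ofFinite κ
    rw [Nat.card_eq_fintype_card]
    exact (card_le_mul_card_image isolated k fun t _ ↦
      hk _ ((filter_subset _ _).trans hisolated) (hfiber t)).trans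
      (Nat.mul_le_mul_left k (card_le_univ _))
  linarith

/-- The tensor `T_F` of the function `F (x, y, z) = [a x + b y + c z = 0]` on `A³`. -/
noncomputable def equationTensor [DecidableEq V] (a b c : F) (A : Finset V) :
    MultilinearMap F (fun _ : Fin 3 ↦ (A → F)) F :=
  tensorOfFun fun x ↦ if a • (x 0 : V) + b • (x 1 : V) + c • (x 2 : V) = 0 then 1 else 0

lemma IsCapSet.card_le_of_sliceRankLE [DecidableEq V] (habc : a + b + c = 0) {A B : Finset V}
    (hBA : B ⊆ A) (hB : IsCapSet a b c (B : Set V)) {k : ℕ}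
    (hT : SliceRankLE (equationTensor a b c A) k) : #B ≤ k := by
  rw [← Fintype.card_coe B]
  refine hT.card_le_of_diagonal_comp (Set.inclusion_injective hBA) fun y ↦ ?_
  simp only [comp_apply, ne_eq, ite_eq_right_iff, one_ne_zero, imp_false, not_not]
  refine ⟨fun h ↦ ?_, fun h ↦ ?_⟩
  · obtain ⟨h01, h12⟩ := hB _ (y 0).2 _ (y 1).2 _ (y 2).2 h
    have h_eq (i : Fin 3) : y i = y 0 := by
      fin_cases i
      exacts [rfl, Subtype.ext h01.symm, Subtype.ext (h01.trans h12).symm]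
    exact fun i j ↦ (h_eq i).trans (h_eq j).symm
  · rw [h 1 0, h 2 0, ← add_smul, ← add_smul, habc, zero_smul]

lemma exists_le_pow_pow_and_pow_le_mul_rpow {q x : ℝ} (hq : 1 < q) (hx : 1 ≤ x) {n : ℕ}
    (hn : n ≠ 0) : ∃ m : ℕ, x ≤ (q ^ m) ^ n ∧ q ^ m ≤ q * x ^ (n⁻¹ : ℝ) := by
  have hroot : 1 ≤ x ^ (n⁻¹ : ℝ) := Real.one_le_rpow hx (by positivity)
  obtain ⟨m, hmx, hxm⟩ := exists_nat_pow_near hroot hq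
  refine ⟨m + 1, ?_, ?_⟩
  · rw [← Real.rpow_inv_natCast_pow (zero_le_one.trans hx) hn]
    gcongr
  · rw [pow_succ']
    gcongr

theorem card_le_mul_rpow_of_sliceRankLE_equationTensor [Finite F] [DecidableEq V] (ha : a ≠ 0)
    (hb : b ≠ 0) (hc : c ≠ 0) (habc : a + b + c = 0) {A A' : Finset V} (hA' : A' ⊆ A) {R : ℝ}
    (hR0 : 0 ≤ R) (hR : ∀ x ∈ A', ((solutionPairs a b c A x).ncard : ℝ) ≤ R) {k : ℕ}
    (hT : SliceRankLE (equationTensor a b c A) k) :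
    (#A' : ℝ) ≤ 4 * Nat.card F * R ^ (3⁻¹ : ℝ) * k := by
  rcases A'.eq_empty_or_nonempty with rfl | ⟨x₀, hx₀⟩
  · rw [card_empty, Nat.cast_zero]
    positivity
  have hR1 : 1 ≤ R := le_trans (mod_cast one_le_ncard_solutionPairs habc (hA' hx₀)) (hR x₀ hx₀)
  -- `m` blocks `F³` make the target `F^{3m}` large enough to separate solutions, while its `|F|^m`
  -- paraboloid classes are only of order `R^{1/3}` in number.
  obtain ⟨m, hRm, hmR⟩ := exists_le_pow_pow_and_pow_le_mul_rpow (q := Nat.card F) (x := 2 * R)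
    (mod_cast Finite.one_lt_card) (by linarith) three_ne_zero
  have hW : (Nat.card (Fin m → (F × F) × F) : ℝ) = (Nat.card F ^ m) ^ 3 := by
    simp only [Nat.card_fun, Nat.card_prod, Nat.card_fin]
    push_cast
    ring
  have hpairs (x : V) (hx : x ∈ A') :
      2 * (solutionPairs a b c A x).ncard ≤ Nat.card (Fin m → (F × F) × F) := by
    rify
    linarith [hR x hx]
  obtain ⟨χ, hχ⟩ := exists_coloring_isCapSet ha hb hc habc (Fin m)
  have hcard : #A' ≤ 2 * (k * Nat.card F ^ m) := by
    simpa only [Nat.card_fun, Nat.card_fin] using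
      card_le_of_forall_isCapSet_card_le hc habc hχ hA' hpairs
        fun B hBA hB ↦ hB.card_le_of_sliceRankLE habc hBA hT
  calc (#A' : ℝ) ≤ 2 * (k * Nat.card F ^ m) := mod_cast hcard
    _ ≤ 2 * (k * (Nat.card F * (2 * R) ^ (3⁻¹ : ℝ))) := by gcongr; exact_mod_cast hmR
    _ ≤ 2 * (k * (Nat.card F * (2 * R ^ (3⁻¹ : ℝ)))) := by
        rw [Real.mul_rpow zero_le_two hR0]
        gcongr
        exact Real.rpow_le_self_of_one_le one_le_two (by norm_num)
    _ = 4 * Nat.card F * R ^ (3⁻¹ : ℝ) * k := by ring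

theorem slice_rank_lower_bound_almost_cap_general [Finite F] [DecidableEq V] (ha : a ≠ 0)
    (hb : b ≠ 0) (hc : c ≠ 0) (habc : a + b + c = 0) {δ ε : ℝ} {A A' : Finset V} (hA' : A' ⊆ A)
    (hδ : δ * #A < #A')
    (hε : ∀ x ∈ A', ((solutionPairs a b c A x).ncard : ℝ) ≤ (#A : ℝ) ^ ε) {k : ℕ}
    (hT : SliceRankLE (equationTensor a b c A) k) :
    δ / (4 * Nat.card F) * (#A : ℝ) ^ (1 - ε / 3) ≤ k := by
  have hA : (0 : ℝ) < #A := by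
    rcases A.eq_empty_or_nonempty with rfl | hne
    · simp [subset_empty.1 hA'] at hδ
    · exact mod_cast hne.card_pos
  have hq : (0 : ℝ) < Nat.card F := mod_cast Nat.card_pos
  have hbound : δ * #A ≤ 4 * Nat.card F * (#A : ℝ) ^ (ε / 3) * k := by
    refine hδ.le.trans ?_
    have h := card_le_mul_rpow_of_sliceRankLE_equationTensor ha hb hc habc hA' (by positivity) hε hT
    rwa [← Real.rpow_mul hA.le, ← div_eq_mul_inv] at h
  rw [Real.rpow_sub hA, Real.rpow_one, div_mul_div_comm, div_le_iff₀ (by positivity)]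
  linarith

end AlmostCap

/-- **Lemma (slice rank lower bound for almost cap sets).**
For every finite field `F_q` and every `0 < δ ≤ 1` there is `C = C(q, δ) > 0` such
that: for every `0 < ε ≤ 1`, every `n`, every admissible tuple `(a, b, c)`, and
every `(ε, δ)`-cap set `A ⊆ F_q^n` for `(a, b, c)`, the 3-tensor
`T_F (f₁, f₂, f₃) = ∑_{(x,y,z) ∈ A³} F (x,y,z) f₁ x f₂ y f₃ z` on `V = (A → F_q)`
associated to the indicator `F (x,y,z) = [ax + by + cz = 0]` has slice rank at
least `C * |A|^{1 - ε/3}`. -/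
theorem slice_rank_lower_bound_almost_cap {𝔽 : Type*} [Field 𝔽] [Fintype 𝔽]
    [DecidableEq 𝔽] (δ : ℝ) (hδ : 0 < δ) (hδ1 : δ ≤ 1) :
    ∃ C : ℝ, 0 < C ∧
      ∀ (ε : ℝ), 0 < ε → ε ≤ 1 →
      ∀ (n : ℕ) (a b c : 𝔽), a ≠ 0 → b ≠ 0 → c ≠ 0 → a + b + c = 0 →
      ∀ A : Finset (Fin n → 𝔽),
        (∃ A' : Finset (Fin n → 𝔽), A' ⊆ A ∧ δ * (A.card : ℝ) < (A'.card : ℝ) ∧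
          ∀ x ∈ A',
            (({p : (Fin n → 𝔽) × (Fin n → 𝔽) | p.1 ∈ A ∧ p.2 ∈ A ∧
                a • x + b • p.1 + c • p.2 = 0}).ncard : ℝ) < (A.card : ℝ) ^ ε) →
        ∀ G : (Fin 3 → ↥A) → 𝔽,
          (∀ x : Fin 3 → ↥A,
            G x = if a • (x 0 : Fin n → 𝔽) + b • (x 1 : Fin n → 𝔽)
                + c • (x 2 : Fin n → 𝔽) = 0 then 1 else 0) →
        ∀ T : MultilinearMap 𝔽 (fun _ : Fin 3 => (↥A → 𝔽)) 𝔽,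
          (∀ v, T v = ∑ x : Fin 3 → ↥A, G x * ∏ i, v i (x i)) →
          ∀ k : ℕ, SliceRankLE T k → C * (A.card : ℝ) ^ (1 - ε / 3) ≤ (k : ℝ) := by
  have hq : (0 : ℝ) < Nat.card 𝔽 := mod_cast Nat.card_pos
  refine ⟨δ / (4 * Nat.card 𝔽), by positivity, ?_⟩
  rintro ε - - n a b c ha hb hc habc A ⟨A', hA', hδA, hε⟩ G hG T hT k hk
  have hT_eq : T = equationTensor a b c A := MultilinearMap.ext fun v ↦ by
    simp only [hT, hG, equationTensor, tensorOfFun_apply]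
  exact slice_rank_lower_bound_almost_cap_general ha hb hc habc hA' hδA
    (fun x hx ↦ (hε x hx).le) (hT_eq ▸ hk)
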